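/- There exists a continuous function c : [0,∞) × [0,∞) → [0,∞) such that for every smooth, nonnegative, integrable and square-integrable function b : ℝ → ℝ and every W^{2,2} solution ρ of the Kazdan–Warner equation ρ'' = 1 − e^{−ρ} − b, one has ‖ρ‖_{L²}² + ‖ρ'‖_{L²}² + ‖ρ''‖_{L²}² ≤ c(‖b‖_{L¹}, ‖b‖_{L²}). -/

import Mathlib

/-!
By the maximum principle `ρ ≥ 0`. Testing the equation against `ρ` gives the energy identity
`∫ ρ'² + ∫ ρ (1 - e^{-ρ}) = ∫ b ρ`, whose right-hand side is at most `M ‖b‖₁` whenever `ρ ≤ M`.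
Since `t² ≤ (1 + M) t (1 - e^{-t})` for `0 ≤ t ≤ M`, the energy also controls `∫ ρ²`, up to the
factor `1 + M`. Agmon's inequality `‖ρ‖_∞⁴ ≤ ∫ ρ² ∫ ρ'²` allows the choice
`M⁴ = ∫ ρ² ∫ ρ'² ≤ (1 + M) (M ‖b‖₁ / 2)²`, and comparing the powers of `M` yields
`M ≤ 1 + ‖b‖₁² / 4`. The equation itself then bounds `ρ''`.
-/

open MeasureTheory Real

/-- `ρ` is a `W^{2,2}` solution of the Kazdan–Warner equation `ρ'' = 1 - e^{-ρ} - b`. -/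
def IsW22SolutionKW (b ρ : ℝ → ℝ) : Prop :=
  ContDiff ℝ 2 ρ ∧
  MeasureTheory.Integrable (fun s => (ρ s) ^ 2) ∧
  MeasureTheory.Integrable (fun s => (deriv ρ s) ^ 2) ∧
  MeasureTheory.Integrable (fun s => (deriv (deriv ρ) s) ^ 2) ∧
  ∀ s : ℝ, deriv (deriv ρ) s = 1 - Real.exp (-ρ s) - b s

open Filter Topology

section SquareIntegrable

lemma integrable_inner_of_memLp_two {α E : Type*} [MeasurableSpace α] {μ : Measure α}
    [NormedAddCommGroup E] [InnerProductSpace ℝ E] {f g : α → E}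
    (hf : MemLp f 2 μ) (hg : MemLp g 2 μ) : Integrable (fun x => inner ℝ (f x) (g x)) μ :=
  (hf.norm.integrable_mul hg.norm).mono' (hf.1.inner hg.1)
    (.of_forall fun x => norm_inner_le_norm (f x) (g x))

lemma integral_norm_mul_norm_le_sqrt_mul_sqrt {α E : Type*} [MeasurableSpace α] {μ : Measure α}
    [NormedAddCommGroup E] {f g : α → E} (hf : MemLp f 2 μ) (hg : MemLp g 2 μ) :
    ∫ x, ‖f x‖ * ‖g x‖ ∂μ ≤ √(∫ x, ‖f x‖ ^ 2 ∂μ) * √(∫ x, ‖g x‖ ^ 2 ∂μ) := by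
  simpa [Real.sqrt_eq_rpow] using
    integral_mul_norm_le_Lp_mul_Lq Real.HolderConjugate.two_two (f := f) (g := g) (μ := μ)
      (by simpa using hf) (by simpa using hg)

variable {E : Type*} [NormedAddCommGroup E] [InnerProductSpace ℝ E] {f f' : ℝ → E}

lemma tendsto_cocompact_zero_of_hasDerivAt_of_memLp_two (hderiv : ∀ x, HasDerivAt f (f' x) x)
    (hf : MemLp f 2) (hf' : MemLp f' 2) : Tendsto f (cocompact ℝ) (𝓝 0) := by
  have hint : Integrable fun x => 2 * inner ℝ (f x) (f' x) :=
    (integrable_inner_of_memLp_two hf hf').const_mul 2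
  have hsq : Integrable fun x => ‖f x‖ ^ 2 := (memLp_two_iff_integrable_sq_norm hf.1).1 hf
  have hlim : Tendsto (fun x => ‖f x‖ ^ 2) (cocompact ℝ) (𝓝 0) := by
    rw [cocompact_eq_atBot_atTop, tendsto_sup]
    exact ⟨tendsto_zero_of_hasDerivAt_of_integrableOn_Iic (a := 0)
        (fun x _ => (hderiv x).norm_sq) hint.integrableOn hsq.integrableOn,
      tendsto_zero_of_hasDerivAt_of_integrableOn_Ioi (a := 0)
        (fun x _ => (hderiv x).norm_sq) hint.integrableOn hsq.integrableOn⟩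
  rw [tendsto_zero_iff_norm_tendsto_zero]
  simpa using hlim.sqrt

lemma norm_sq_le_integral_norm_mul_norm_deriv (hderiv : ∀ x, HasDerivAt f (f' x) x)
    (hf : MemLp f 2) (hf' : MemLp f' 2) (x : ℝ) : ‖f x‖ ^ 2 ≤ ∫ s, ‖f s‖ * ‖f' s‖ := by
  have hint : Integrable fun s => inner ℝ (f s) (f' s) := integrable_inner_of_memLp_two hf hf'
  have hmul : Integrable fun s => ‖f s‖ * ‖f' s‖ := hf.norm.integrable_mul hf'.norm
  have hlim : Tendsto (fun s => ‖f s‖ ^ 2) (cocompact ℝ) (𝓝 0) := by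
    simpa using (tendsto_cocompact_zero_of_hasDerivAt_of_memLp_two hderiv hf hf').norm.pow 2
  have hleft : ∫ s in Set.Iic x, 2 * inner ℝ (f s) (f' s) = ‖f x‖ ^ 2 - 0 :=
    integral_Iic_of_hasDerivAt_of_tendsto' (fun s _ => (hderiv s).norm_sq)
      (hint.const_mul 2).integrableOn (hlim.mono_left atBot_le_cocompact)
  have hright : ∫ s in Set.Ioi x, 2 * inner ℝ (f s) (f' s) = 0 - ‖f x‖ ^ 2 :=
    integral_Ioi_of_hasDerivAt_of_tendsto' (fun s _ => (hderiv s).norm_sq)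
      (hint.const_mul 2).integrableOn (hlim.mono_left atTop_le_cocompact)
  rw [integral_const_mul] at hleft hright
  have habs (t : Set ℝ) : |∫ s in t, inner ℝ (f s) (f' s)| ≤ ∫ s in t, ‖f s‖ * ‖f' s‖ := by
    rw [← norm_eq_abs]
    exact norm_integral_le_of_norm_le hmul.integrableOn
      (.of_forall fun s => norm_inner_le_norm (f s) (f' s))
  calc ‖f x‖ ^ 2
      = (∫ s in Set.Iic x, inner ℝ (f s) (f' s)) - ∫ s in Set.Ioi x, inner ℝ (f s) (f' s) := by
        linarith
    _ ≤ (∫ s in Set.Iic x, ‖f s‖ * ‖f' s‖) + ∫ s in Set.Ioi x, ‖f s‖ * ‖f' s‖ := by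
        linarith [(abs_le.1 (habs (Set.Iic x))).2, (abs_le.1 (habs (Set.Ioi x))).1]
    _ = ∫ s, ‖f s‖ * ‖f' s‖ :=
        intervalIntegral.integral_Iic_add_Ioi hmul.integrableOn hmul.integrableOn

theorem agmon_inequality (hderiv : ∀ x, HasDerivAt f (f' x) x)
    (hf : MemLp f 2) (hf' : MemLp f' 2) (x : ℝ) :
    ‖f x‖ ^ 2 ≤ √(∫ s, ‖f s‖ ^ 2) * √(∫ s, ‖f' s‖ ^ 2) :=
  (norm_sq_le_integral_norm_mul_norm_deriv hderiv hf hf' x).trans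
    (integral_norm_mul_norm_le_sqrt_mul_sqrt hf hf')

end SquareIntegrable

section MaximumPrinciple

variable {f : ℝ → ℝ}

lemma deriv_deriv_nonneg_of_isLocalMin {x : ℝ} (hmin : IsLocalMin f x) (hf : ContinuousAt f x) :
    0 ≤ deriv (deriv f) x := by
  by_contra! hneg
  have hmax : IsLocalMax f x := isLocalMax_of_deriv_deriv_neg hneg hmin.deriv_eq_zero hf
  have hconst : f =ᶠ[𝓝 x] fun _ => f x := by
    filter_upwards [hmin, hmax] with y hmin_y hmax_y using le_antisymm hmax_y hmin_y
  rw [hconst.deriv.deriv_eq] at hneg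
  simp at hneg

theorem nonneg_of_deriv_deriv_neg_of_neg (hf : Continuous f)
    (hlim : Tendsto f (cocompact ℝ) (𝓝 0)) (hneg : ∀ x, f x < 0 → deriv (deriv f) x < 0)
    (x : ℝ) : 0 ≤ f x := by
  by_contra! hx
  obtain ⟨z, hz⟩ := hf.exists_forall_le' x
    ((hlim.eventually (lt_mem_nhds hx)).mono fun _ h => h.le)
  exact (deriv_deriv_nonneg_of_isLocalMin (.of_forall hz) hf.continuousAt).not_gt
    (hneg z ((hz x).trans_lt hx))

end MaximumPrinciple

lemma one_sub_exp_neg_nonneg {t : ℝ} (ht : 0 ≤ t) : 0 ≤ 1 - exp (-t) :=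
  sub_nonneg.2 (exp_le_one_iff.2 (neg_nonpos.2 ht))

lemma one_sub_exp_neg_le (t : ℝ) : 1 - exp (-t) ≤ t := by
  linarith [one_sub_le_exp_neg t]

lemma le_one_add_mul_one_sub_exp_neg (t : ℝ) : t ≤ (1 + t) * (1 - exp (-t)) := by
  have h : (t + 1) * exp (-t) ≤ 1 := by
    calc (t + 1) * exp (-t) ≤ exp t * exp (-t) := by gcongr; exact add_one_le_exp t
      _ = 1 := by rw [← exp_add, add_neg_cancel, exp_zero]
  linarith

lemma sq_le_one_add_mul_mul_one_sub_exp_neg {t M : ℝ} (ht : 0 ≤ t) (htM : t ≤ M) :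
    t ^ 2 ≤ (1 + M) * (t * (1 - exp (-t))) := by
  have hexp := one_sub_exp_neg_nonneg ht
  calc t ^ 2 = t * t := sq t
    _ ≤ t * ((1 + t) * (1 - exp (-t))) := by
        gcongr
        exact le_one_add_mul_one_sub_exp_neg t
    _ ≤ t * ((1 + M) * (1 - exp (-t))) := by gcongr
    _ = (1 + M) * (t * (1 - exp (-t))) := by ring

lemma le_one_add_of_pow_four_le {M K : ℝ} (hK : 0 ≤ K) (h : M ^ 4 ≤ (1 + M) * (M ^ 2 * K)) :
    M ≤ 1 + K := by
  by_contra! hlt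
  have hM : 0 < M := by linarith
  have hsq : M ^ 2 ≤ (1 + M) * K := by
    refine le_of_mul_le_mul_left ?_ (pow_pos hM 2)
    linarith
  have hmul : (1 + M) * K ≤ (1 + M) * (M - 1) := by
    gcongr
    linarith
  linarith

namespace IsW22SolutionKW

variable {b ρ : ℝ → ℝ}

lemma deriv_deriv_eq (h : IsW22SolutionKW b ρ) (s : ℝ) :
    deriv (deriv ρ) s = 1 - exp (-ρ s) - b s :=
  h.2.2.2.2 s

lemma continuous (h : IsW22SolutionKW b ρ) : Continuous ρ :=
  h.1.continuous

lemma hasDerivAt (h : IsW22SolutionKW b ρ) (s : ℝ) : HasDerivAt ρ (deriv ρ s) s :=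
  (h.1.differentiable two_ne_zero s).hasDerivAt

lemma hasDerivAt_deriv (h : IsW22SolutionKW b ρ) (s : ℝ) :
    HasDerivAt (deriv ρ) (deriv (deriv ρ) s) s :=
  (h.1.differentiable_deriv_two s).hasDerivAt

lemma memLp_two (h : IsW22SolutionKW b ρ) : MemLp ρ 2 :=
  (memLp_two_iff_integrable_sq h.continuous.aestronglyMeasurable).2 h.2.1

lemma memLp_two_deriv (h : IsW22SolutionKW b ρ) : MemLp (deriv ρ) 2 :=
  (memLp_two_iff_integrable_sq (measurable_deriv ρ).aestronglyMeasurable).2 h.2.2.1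

lemma memLp_two_deriv_deriv (h : IsW22SolutionKW b ρ) : MemLp (deriv (deriv ρ)) 2 :=
  (memLp_two_iff_integrable_sq (measurable_deriv _).aestronglyMeasurable).2 h.2.2.2.1

theorem nonneg (h : IsW22SolutionKW b ρ) (hb : ∀ s, 0 ≤ b s) : ∀ s, 0 ≤ ρ s := by
  refine nonneg_of_deriv_deriv_neg_of_neg h.continuous
    (tendsto_cocompact_zero_of_hasDerivAt_of_memLp_two h.hasDerivAt h.memLp_two
      h.memLp_two_deriv) fun s hs => ?_
  have hexp : 1 < exp (-ρ s) := one_lt_exp_iff.2 (neg_pos.2 hs)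
  linarith [h.deriv_deriv_eq s, hb s]

lemma memLp_two_one_sub_exp_neg (h : IsW22SolutionKW b ρ) (hb : ∀ s, 0 ≤ b s) :
    MemLp (fun s => 1 - exp (-ρ s)) 2 := by
  have hcont := h.continuous
  refine h.memLp_two.mono' (by fun_prop) (.of_forall fun s => ?_)
  rw [norm_of_nonneg (one_sub_exp_neg_nonneg (h.nonneg hb s))]
  exact one_sub_exp_neg_le (ρ s)

lemma memLp_two_source (h : IsW22SolutionKW b ρ) (hb : ∀ s, 0 ≤ b s) : MemLp b 2 := by
  have hb_eq : b = (fun s => 1 - exp (-ρ s)) - deriv (deriv ρ) := by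
    ext s
    simp only [Pi.sub_apply, h.deriv_deriv_eq, sub_sub_cancel]
  rw [hb_eq]
  exact (h.memLp_two_one_sub_exp_neg hb).sub h.memLp_two_deriv_deriv

lemma integrable_mul_one_sub_exp_neg (h : IsW22SolutionKW b ρ) (hb : ∀ s, 0 ≤ b s) :
    Integrable fun s => ρ s * (1 - exp (-ρ s)) :=
  h.memLp_two.integrable_mul (h.memLp_two_one_sub_exp_neg hb)

lemma integrable_mul_source (h : IsW22SolutionKW b ρ) (hb : ∀ s, 0 ≤ b s) :
    Integrable fun s => ρ s * b s :=
  h.memLp_two.integrable_mul (h.memLp_two_source hb)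

theorem energy_identity (h : IsW22SolutionKW b ρ) (hb : ∀ s, 0 ≤ b s) :
    (∫ s, deriv ρ s ^ 2) + ∫ s, ρ s * (1 - exp (-ρ s)) = ∫ s, ρ s * b s := by
  have hparts : ∫ s, ρ s * deriv (deriv ρ) s = -∫ s, deriv ρ s * deriv ρ s :=
    integral_mul_deriv_eq_deriv_mul_of_integrable (fun s _ => h.hasDerivAt s)
      (fun s _ => h.hasDerivAt_deriv s) (h.memLp_two.integrable_mul h.memLp_two_deriv_deriv)
      (h.memLp_two_deriv.integrable_mul h.memLp_two_deriv)
      (h.memLp_two.integrable_mul h.memLp_two_deriv)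
  have hsplit : ∫ s, ρ s * deriv (deriv ρ) s =
      (∫ s, ρ s * (1 - exp (-ρ s))) - ∫ s, ρ s * b s := by
    rw [← integral_sub (h.integrable_mul_one_sub_exp_neg hb) (h.integrable_mul_source hb)]
    simp only [h.deriv_deriv_eq, mul_sub]
  simp only [sq]
  linarith

lemma energy_le_mul_integral {M : ℝ} (h : IsW22SolutionKW b ρ) (hb : ∀ s, 0 ≤ b s)
    (hb_int : Integrable b) (hM : ∀ s, ρ s ≤ M) :
    (∫ s, deriv ρ s ^ 2) + ∫ s, ρ s * (1 - exp (-ρ s)) ≤ M * ∫ s, b s := by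
  rw [h.energy_identity hb, ← integral_const_mul]
  exact integral_mono (h.integrable_mul_source hb) (hb_int.const_mul M)
    fun s => mul_le_mul_of_nonneg_right (hM s) (hb s)

lemma integral_sq_le_one_add_mul {M : ℝ} (h : IsW22SolutionKW b ρ) (hb : ∀ s, 0 ≤ b s)
    (hM : ∀ s, ρ s ≤ M) :
    ∫ s, ρ s ^ 2 ≤ (1 + M) * ∫ s, ρ s * (1 - exp (-ρ s)) := by
  rw [← integral_const_mul]
  exact integral_mono h.memLp_two.integrable_sq
    ((h.integrable_mul_one_sub_exp_neg hb).const_mul (1 + M))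
    fun s => sq_le_one_add_mul_mul_one_sub_exp_neg (h.nonneg hb s) (hM s)

theorem le_one_add_integral_sq_div_four (h : IsW22SolutionKW b ρ) (hb : ∀ s, 0 ≤ b s)
    (hb_int : Integrable b) (s : ℝ) : ρ s ≤ 1 + (∫ t, b t) ^ 2 / 4 := by
  set P := ∫ t, ρ t ^ 2
  set D := ∫ t, deriv ρ t ^ 2
  set H := ∫ t, ρ t * (1 - exp (-ρ t))
  set M := √(√P * √D)
  have hP : 0 ≤ P := integral_nonneg fun t => sq_nonneg (ρ t)
  have hD : 0 ≤ D := integral_nonneg fun t => sq_nonneg (deriv ρ t)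
  have hH : 0 ≤ H := integral_nonneg fun t =>
    mul_nonneg (h.nonneg hb t) (one_sub_exp_neg_nonneg (h.nonneg hb t))
  have hρM (t : ℝ) : ρ t ≤ M := by
    refine le_sqrt_of_sq_le ?_
    simpa using agmon_inequality h.hasDerivAt h.memLp_two h.memLp_two_deriv t
  have hM4 : M ^ 4 = P * D := by
    calc M ^ 4 = (M ^ 2) ^ 2 := by ring
      _ = P * D := by rw [sq_sqrt (by positivity), mul_pow, sq_sqrt hP, sq_sqrt hD]
  have henergy : D + H ≤ M * ∫ t, b t := h.energy_le_mul_integral hb hb_int hρM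
  refine (hρM s).trans (le_one_add_of_pow_four_le (by positivity) ?_)
  calc M ^ 4 = P * D := hM4
    _ ≤ (1 + M) * H * D := by
        gcongr
        exact h.integral_sq_le_one_add_mul hb hρM
    _ = (1 + M) * (4 * D * H / 4) := by ring
    _ ≤ (1 + M) * ((D + H) ^ 2 / 4) := by
        gcongr
        exact four_mul_le_sq_add D H
    _ ≤ (1 + M) * ((M * ∫ t, b t) ^ 2 / 4) := by gcongr
    _ = (1 + M) * (M ^ 2 * ((∫ t, b t) ^ 2 / 4)) := by ring

lemma integral_deriv_deriv_sq_le (h : IsW22SolutionKW b ρ) (hb : ∀ s, 0 ≤ b s) :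
    ∫ s, deriv (deriv ρ) s ^ 2 ≤ (∫ s, ρ s ^ 2) + ∫ s, b s ^ 2 := by
  have hρ_sq := h.memLp_two.integrable_sq
  have hb_sq := (h.memLp_two_source hb).integrable_sq
  rw [← integral_add hρ_sq hb_sq]
  refine integral_mono h.memLp_two_deriv_deriv.integrable_sq (hρ_sq.add hb_sq) fun s => ?_
  have hexp := one_sub_exp_neg_nonneg (h.nonneg hb s)
  calc deriv (deriv ρ) s ^ 2 = (1 - exp (-ρ s) - b s) ^ 2 := by rw [h.deriv_deriv_eq]
    _ ≤ (1 - exp (-ρ s)) ^ 2 + b s ^ 2 := by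
        linarith [mul_nonneg hexp (hb s), sub_sq (1 - exp (-ρ s)) (b s)]
    _ ≤ ρ s ^ 2 + b s ^ 2 := by
        gcongr
        exact one_sub_exp_neg_le (ρ s)

end IsW22SolutionKW

theorem kazdan_warner_uniform_W22_bound_general {b ρ : ℝ → ℝ} (hb : ∀ s, 0 ≤ b s)
    (hb_int : Integrable b) (h : IsW22SolutionKW b ρ) :
    (∫ s, ρ s ^ 2) + (∫ s, deriv ρ s ^ 2) + (∫ s, deriv (deriv ρ) s ^ 2) ≤
      2 * (2 + (∫ s, b s) ^ 2 / 4) * ((1 + (∫ s, b s) ^ 2 / 4) * ∫ s, b s) + ∫ s, b s ^ 2 := by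
  set M := 1 + (∫ s, b s) ^ 2 / 4 with hM
  have hρM (s : ℝ) : ρ s ≤ M := h.le_one_add_integral_sq_div_four hb hb_int s
  have henergy := h.energy_le_mul_integral hb hb_int hρM
  have hρ_sq := h.integral_sq_le_one_add_mul hb hρM
  have hρ''_sq := h.integral_deriv_deriv_sq_le hb
  have hρ'_sq : 0 ≤ ∫ s, deriv ρ s ^ 2 := integral_nonneg fun s => sq_nonneg (deriv ρ s)
  have hM0 : 0 ≤ M := by positivity
  calc _ ≤ 2 * (∫ s, ρ s ^ 2) + (∫ s, deriv ρ s ^ 2) + ∫ s, b s ^ 2 := by linarith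
    _ ≤ 2 * (1 + M) * ((∫ s, deriv ρ s ^ 2) + ∫ s, ρ s * (1 - exp (-ρ s))) + ∫ s, b s ^ 2 := by
        linarith [mul_nonneg hM0 hρ'_sq]
    _ ≤ 2 * (1 + M) * (M * ∫ s, b s) + ∫ s, b s ^ 2 := by gcongr
    _ = 2 * (2 + (∫ s, b s) ^ 2 / 4) * (M * ∫ s, b s) + ∫ s, b s ^ 2 := by rw [hM]; ring

/-- There is a continuous nonnegative function `c` on `[0,∞) × [0,∞)` such that every
`W^{2,2}` solution `ρ` of the Kazdan–Warner equation for a smooth, nonnegative,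
integrable and square-integrable `b` satisfies
`‖ρ‖_{L²}² + ‖ρ'‖_{L²}² + ‖ρ''‖_{L²}² ≤ c(‖b‖_{L¹}, ‖b‖_{L²})`. -/
theorem kazdan_warner_uniform_W22_bound :
    ∃ c : ℝ → ℝ → ℝ,
      ContinuousOn (fun p : ℝ × ℝ => c p.1 p.2) (Set.Ici 0 ×ˢ Set.Ici 0) ∧
      (∀ x y : ℝ, 0 ≤ x → 0 ≤ y → 0 ≤ c x y) ∧
      ∀ b ρ : ℝ → ℝ, ContDiff ℝ (⊤ : ℕ∞) b → (∀ s, 0 ≤ b s) → Integrable b →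
        (Integrable fun s => (b s) ^ 2) → IsW22SolutionKW b ρ →
        (∫ s : ℝ, (ρ s) ^ 2) + (∫ s : ℝ, (deriv ρ s) ^ 2) +
            (∫ s : ℝ, (deriv (deriv ρ) s) ^ 2) ≤
          c (∫ s : ℝ, |b s|) (Real.sqrt (∫ s : ℝ, (b s) ^ 2)) := by
  refine ⟨fun x y => 2 * (2 + x ^ 2 / 4) * ((1 + x ^ 2 / 4) * x) + y ^ 2, by fun_prop,
    fun x y hx _ => by positivity, fun b ρ _ hb hb_int _ h => ?_⟩
  simp only [abs_of_nonneg (hb _), sq_sqrt (integral_nonneg fun s => sq_nonneg (b s))]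
  exact kazdan_warner_uniform_W22_bound_general hb hb_int h
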